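/- arXiv:1112.5415 — 2 statements merged into one kernel-verified Lean document; each statement's English description precedes it below -/
import Mathlib

section
/- For every injective sequence (ρ_n)_{n∈ℕ} of positive roots in Φ⁺ and every norm ‖·‖ on V, the sequence of norms ‖ρ_n‖ tends to infinity. -/
/-!
A nontrivial element of `W` sends some simple root to a negative combination of the simple roots:
this reduces to the rank two subgroups, where the coefficients of a root are values of Chebyshev
polynomials of the second kind at `-B(α, β)`. So an element of `W` close enough to the identity to
keep every simple root on the positive side of a fixed hyperplane is the identity. If `x` and `y`
are two roots close to a vector `z` with `B(z, z) = 1`, the product of their reflections is close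
to the identity, since the reflection in `z` squares to it; hence the two reflections agree and
`x = ± y`. Roots therefore cannot accumulate, and a compact set contains only finitely many.
-/

open Filter Topology

noncomputable section

variable {ι V : Type*} [Fintype ι] [NormedAddCommGroup V] [NormedSpace ℝ V]

/-- The set of simple `B`-reflections: the linear automorphisms of `V` given by the
`B`-reflection formula `u ↦ u - 2 (B α u / B α α) • α` associated to a simple root `α ∈ Δ`. -/
def simpleReflections (B : LinearMap.BilinForm ℝ V) (Δ : Module.Basis ι ℝ V) :
    Set (V ≃ₗ[ℝ] V) :=
  { e | ∃ i : ι, ∀ u : V, e u = u - (2 * B (Δ i) u / B (Δ i) (Δ i)) • Δ i }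

/-- The geometric Coxeter group `W`: the subgroup of linear automorphisms of `V`
generated by the simple `B`-reflections. -/
def cox (B : LinearMap.BilinForm ℝ V) (Δ : Module.Basis ι ℝ V) : Subgroup (V ≃ₗ[ℝ] V) :=
  Subgroup.closure (simpleReflections B Δ)

/-- The root system `Φ = W ⬝ Δ`. -/
def Phi (B : LinearMap.BilinForm ℝ V) (Δ : Module.Basis ι ℝ V) : Set V :=
  { ρ | ∃ w ∈ cox B Δ, ∃ i : ι, w (Δ i) = ρ }

/-- The positive roots `Φ⁺ = Φ ∩ cone(Δ)`. -/
def posPhi (B : LinearMap.BilinForm ℝ V) (Δ : Module.Basis ι ℝ V) : Set V :=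
  { ρ ∈ Phi B Δ | ∀ i : ι, 0 ≤ Δ.repr ρ i }

/-- `|v|₁`: the sum of the coordinates of `v` in the basis `Δ`. -/
def l1 (Δ : Module.Basis ι ℝ V) (v : V) : ℝ := ∑ i : ι, Δ.repr v i

/-- The normalization map `v ↦ v̂ = v / |v|₁`. -/
def nrm (Δ : Module.Basis ι ℝ V) (v : V) : V := (l1 Δ v)⁻¹ • v

/-- The set `Φ̂` of normalized roots. -/
def nPhi (B : LinearMap.BilinForm ℝ V) (Δ : Module.Basis ι ℝ V) : Set V :=
  nrm Δ '' posPhi B Δ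

/-- `E(Φ)`: the set of accumulation points of the set of normalized roots. -/
def Eset (B : LinearMap.BilinForm ℝ V) (Δ : Module.Basis ι ℝ V) : Set V :=
  { x | AccPt x (𝓟 (nPhi B Δ)) }

/-- The isotropic cone `Q` of `B`. -/
def isoQ (B : LinearMap.BilinForm ℝ V) : Set V := { v | B v v = 0 }

open CoxeterSystem (alternatingWord alternatingWord_succ alternatingWord_succ')

section Words

variable {κ G : Type*} [Monoid G] {σ : κ → G}

/-- A word in the letters `κ` is reduced if it is a shortest expression of the product it spells
in the elements `σ i`. -/
def IsReducedWord (σ : κ → G) (L : List κ) : Prop :=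
  ∀ L' : List κ, (L'.map σ).prod = (L.map σ).prod → L.length ≤ L'.length

/-- The letter `s` is a right descent of the word `L` if multiplying the product spelled by `L` by
`σ s` on the right gives an element with an expression shorter than `L`. -/
def IsRightDescent (σ : κ → G) (L : List κ) (s : κ) : Prop :=
  ∃ L' : List κ, (L'.map σ).prod = (L.map σ).prod * σ s ∧ L'.length < L.length

theorem exists_isReducedWord (σ : κ → G) (L : List κ) :
    ∃ L' : List κ, (L'.map σ).prod = (L.map σ).prod ∧ IsReducedWord σ L' := by
  obtain ⟨L', hL', hmin⟩ := exists_minimalFor_of_wellFoundedLT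
    (fun L' : List κ ↦ (L'.map σ).prod = (L.map σ).prod) List.length ⟨L, rfl⟩
  exact ⟨L', hL', fun L'' h ↦ (le_total _ _).elim id (hmin (h.trans hL'))⟩

theorem IsReducedWord.of_append_right {A M : List κ} (h : IsReducedWord σ (A ++ M)) :
    IsReducedWord σ M := by
  intro L hL
  simpa using h (A ++ L) (by simp [hL])

theorem IsReducedWord.of_append_left {A M : List κ} (h : IsReducedWord σ (A ++ M)) :
    IsReducedWord σ A := by
  intro L hL
  simpa using h (L ++ M) (by simp [hL])

theorem IsReducedWord.not_isRightDescent_of_concat {L : List κ} {t : κ}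
    (h : IsReducedWord σ (L ++ [t])) : ¬ IsRightDescent σ L t := by
  rintro ⟨L', hL', hlt⟩
  have hle := h L' (by simp [hL'])
  rw [List.length_append] at hle
  omega

theorem IsRightDescent.append_left {M : List κ} {s : κ} (h : IsRightDescent σ M s) (A : List κ) :
    IsRightDescent σ (A ++ M) s := by
  obtain ⟨L, hL, hlt⟩ := h
  exact ⟨A ++ L, by simp [hL, mul_assoc], by simpa using hlt⟩

theorem isRightDescent_concat {s : κ} (hs : σ s * σ s = 1) (L : List κ) :
    IsRightDescent σ (L ++ [s]) s :=
  ⟨L, by simp [mul_assoc, hs], by simp⟩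

/-- This is the minimal coset representative of a standard parabolic subgroup: as long as `A` has
a right descent `j ∈ J`, the letter `j` can be moved from `A` to `M`. -/
theorem IsReducedWord.exists_append_forall_not_isRightDescent (hσ : ∀ i, σ i * σ i = 1)
    {J : Set κ} (A M : List κ) (hM : ∀ j ∈ M, j ∈ J) (hAM : IsReducedWord σ (A ++ M)) :
    ∃ A' M' : List κ, (∀ j ∈ M', j ∈ J) ∧ ((A' ++ M').map σ).prod = ((A ++ M).map σ).prod ∧
      IsReducedWord σ (A' ++ M') ∧ A'.length ≤ A.length ∧ ∀ j ∈ J, ¬ IsRightDescent σ A' j := by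
  induction hn : A.length using Nat.strong_induction_on generalizing A M with
  | _ n ih =>
  subst hn
  by_cases hJ : ∀ j ∈ J, ¬ IsRightDescent σ A j
  · exact ⟨A, M, hM, rfl, hAM, le_rfl, hJ⟩
  push Not at hJ
  obtain ⟨j, hj, B, hB, hlt⟩ := hJ
  have hprod : ((B ++ j :: M).map σ).prod = ((A ++ M).map σ).prod := by
    simp only [List.map_append, List.map_cons, List.prod_append, List.prod_cons, hB, mul_assoc]
    rw [← mul_assoc (σ j), hσ, one_mul]
  have hlen : (B ++ j :: M).length ≤ (A ++ M).length := by
    simp only [List.length_append, List.length_cons]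
    omega
  have hred : IsReducedWord σ (B ++ j :: M) := fun L hL ↦ hlen.trans (hAM L (hL.trans hprod))
  obtain ⟨A', M', hM', hprod', hred', hle, hJ'⟩ :=
    ih B.length hlt B (j :: M) (List.forall_mem_cons.mpr ⟨hj, hM⟩) hred rfl
  exact ⟨A', M', hM', hprod'.trans hprod, hred', hle.trans hlt.le, hJ'⟩

theorem IsReducedWord.eq_alternatingWord {s t : κ} {M : List κ} (hσ : ∀ i, σ i * σ i = 1)
    (hM : ∀ i ∈ M, i = s ∨ i = t) (hred : IsReducedWord σ M) (hs : ¬ IsRightDescent σ M s) :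
    M = alternatingWord s t M.length := by
  induction M using List.reverseRecOn generalizing s t with
  | nil => rfl
  | append_singleton M i ih =>
    obtain rfl : i = t := (hM i (by simp)).resolve_left
      fun h ↦ hs (h ▸ isRightDescent_concat (hσ i) M)
    rw [List.length_append, List.length_singleton, alternatingWord_succ,
      List.concat_eq_append, ← ih (fun j hj ↦ (hM j (by simp [hj])).symm) hred.of_append_left
        hred.not_isRightDescent_of_concat]

theorem alternatingWord_suffix (s t : κ) {m n : ℕ} (h : m ≤ n) :
    alternatingWord s t m <:+ alternatingWord s t n := by
  induction n, h using Nat.le_induction with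
  | base => exact List.suffix_rfl
  | succ n _ ih =>
    rw [alternatingWord_succ']
    exact ih.trans (List.suffix_cons _ _)

end Words

section Reflections

variable {R M κ : Type*} [CommRing R] [AddCommGroup M] [Module R M]
variable {B : LinearMap.BilinForm R M} {α : κ → M}

/-- The linear map `y ↦ y - 2 B(x, y) x`, which is the `B`-reflection in `x` when `B x x = 1`. -/
def unitReflection (B : LinearMap.BilinForm R M) (x : M) : Module.End R M :=
  Module.preReflection x ((2 : R) • B x)

theorem unitReflection_apply (x y : M) : unitReflection B x y = y - (2 * B x y) • x := by
  simp [unitReflection, Module.preReflection_apply]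

theorem unitReflection_apply_self {x : M} (hx : B x x = 1) : unitReflection B x x = -x :=
  Module.preReflection_apply_self (by simp [hx])

theorem unitReflection_mul_self {x : M} (hx : B x x = 1) :
    unitReflection B x * unitReflection B x = 1 :=
  LinearMap.ext (Module.involutive_preReflection (by simp [hx]))

theorem apply_unitReflection_unitReflection (hB : B.IsSymm) {x : M} (hx : B x x = 1) (u v : M) :
    B (unitReflection B x u) (unitReflection B x v) = B u v := by
  have hux : B u x = B x u := hB.eq u x
  simp only [unitReflection_apply, map_sub, map_smul, LinearMap.sub_apply, LinearMap.smul_apply,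
    smul_eq_mul, hx, hux]
  ring

theorem unitReflection_apply_mul {g : Module.End R M} (hg : ∀ u v, B (g u) (g v) = B u v) (x : M) :
    unitReflection B (g x) * g = g * unitReflection B x := by
  ext v
  simp only [Module.End.mul_apply, unitReflection_apply, map_sub, map_smul, hg]

theorem apply_prod_unitReflection (hB : B.IsSymm) (hα : ∀ i, B (α i) (α i) = 1) (L : List κ)
    (u v : M) :
    B ((L.map (unitReflection B ∘ α)).prod u) ((L.map (unitReflection B ∘ α)).prod v) = B u v := by
  induction L with
  | nil => rfl
  | cons i L ih =>
    simp only [List.map_cons, List.prod_cons, Module.End.mul_apply, Function.comp_apply,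
      apply_unitReflection_unitReflection hB (hα i), ih]

theorem prod_mul_prod_reverse_unitReflection (hα : ∀ i, B (α i) (α i) = 1) (L : List κ) :
    (L.map (unitReflection B ∘ α)).prod * (L.reverse.map (unitReflection B ∘ α)).prod = 1 := by
  induction L with
  | nil => simp
  | cons i L ih =>
    simp only [List.reverse_cons, List.map_append, List.map_cons, List.map_nil, List.prod_append,
      List.prod_cons, List.prod_nil, mul_one, Function.comp_apply, mul_assoc]
    rw [← mul_assoc _ _ (unitReflection B (α i)), ih, one_mul, unitReflection_mul_self (hα i)]

open Polynomial.Chebyshev in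
theorem prod_alternatingWord_apply (hB : B.IsSymm) (hα : ∀ i, B (α i) (α i) = 1) (s t : κ)
    (n : ℕ) :
    ((alternatingWord s t n).map (unitReflection B ∘ α)).prod (α s) =
      (U R n).eval (-B (α s) (α t)) • α (if Even n then s else t) +
        (U R (n - 1)).eval (-B (α s) (α t)) • α (if Even n then t else s) := by
  induction n with
  | zero => simp [alternatingWord]
  | succ n ih =>
    have hts : B (α t) (α s) = B (α s) (α t) := hB.eq _ _
    rw [alternatingWord_succ', List.map_cons, List.prod_cons, Module.End.mul_apply, ih,
      Function.comp_apply, unitReflection_apply]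
    push_cast
    rw [add_sub_cancel_right, U_add_one]
    by_cases hn : Even n
    all_goals
      simp only [hn, Nat.even_add_one, not_true, not_false_iff, if_true, if_false, map_add,
        map_smul, hα, hts, smul_eq_mul, Polynomial.eval_sub, Polynomial.eval_mul,
        Polynomial.eval_X, Polynomial.eval_ofNat]
      module

/-- The roots of `B` with simple roots `α`: the images of the simple roots under products of simple
reflections. -/
def rootsOf (B : LinearMap.BilinForm R M) (α : κ → M) : Set M :=
  {x | ∃ (L : List κ) (i : κ), (L.map (unitReflection B ∘ α)).prod (α i) = x}

theorem apply_self_of_mem_rootsOf (hB : B.IsSymm) (hα : ∀ i, B (α i) (α i) = 1) {x : M}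
    (hx : x ∈ rootsOf B α) : B x x = 1 := by
  obtain ⟨L, i, rfl⟩ := hx
  rw [apply_prod_unitReflection hB hα, hα]

theorem exists_prod_eq_unitReflection (hB : B.IsSymm) (hα : ∀ i, B (α i) (α i) = 1) {x : M}
    (hx : x ∈ rootsOf B α) :
    ∃ L : List κ, (L.map (unitReflection B ∘ α)).prod = unitReflection B x := by
  obtain ⟨L, i, rfl⟩ := hx
  refine ⟨L ++ i :: L.reverse, ?_⟩
  rw [List.map_append, List.map_cons, List.prod_append, List.prod_cons, Function.comp_apply,
    ← mul_assoc, ← unitReflection_apply_mul (apply_prod_unitReflection hB hα L), mul_assoc,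
    prod_mul_prod_reverse_unitReflection hα, mul_one]

theorem eq_or_eq_neg_of_unitReflection_mul_eq_one [IsDomain R] [NeZero (2 : R)]
    [Module.IsTorsionFree R M] {x y : M} (hx : B x x = 1) (hy : B y y = 1)
    (hxy : unitReflection B x * unitReflection B y = 1) : x = y ∨ x = -y := by
  have hrefl : unitReflection B x = unitReflection B y := by
    rw [← mul_one (unitReflection B x), ← unitReflection_mul_self hy, ← mul_assoc, hxy, one_mul]
  have hneg : y - (2 * B x y) • x = -y := by
    rw [← unitReflection_apply, hrefl, unitReflection_apply_self hy]
  have hproj : y = B x y • x := by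
    have htwo : (2 : R) • y = (2 : R) • B x y • x := by
      linear_combination (norm := module) hneg
    exact smul_right_injective M two_ne_zero htwo
  have hsq : B x y * B x y = 1 := by
    rw [hproj] at hy
    simpa [hx] using hy
  rcases mul_self_eq_one_iff.mp hsq with h | h
  · left; rw [hproj, h, one_smul]
  · right; rw [hproj, h, neg_one_smul, neg_neg]

end Reflections

section CoxeterGroup

variable {κ E : Type*} [NormedAddCommGroup E] [NormedSpace ℝ E]
variable {B : LinearMap.BilinForm ℝ E} {Δ : Module.Basis κ ℝ E}

theorem exists_prod_eq_of_mem_cox (hdiag : ∀ i, B (Δ i) (Δ i) = 1) {w : E ≃ₗ[ℝ] E}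
    (hw : w ∈ cox B Δ) :
    ∃ L : List κ, (L.map (unitReflection B ∘ Δ)).prod = w := by
  induction hw using Subgroup.closure_induction with
  | mem e he =>
    obtain ⟨i, hi⟩ := he
    refine ⟨[i], LinearMap.ext fun v ↦ ?_⟩
    simp [unitReflection_apply, hi, hdiag]
  | one => exact ⟨[], rfl⟩
  | mul x y _ _ hx hy =>
    obtain ⟨L, hL⟩ := hx
    obtain ⟨P, hP⟩ := hy
    refine ⟨L ++ P, ?_⟩
    rw [List.map_append, List.prod_append, hL, hP]
    rfl
  | inv x _ hx =>
    obtain ⟨L, hL⟩ := hx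
    refine ⟨L.reverse, LinearMap.ext fun v ↦ x.injective ?_⟩
    have hrev := LinearMap.congr_fun (prod_mul_prod_reverse_unitReflection hdiag L) v
    rw [hL] at hrev
    exact hrev.trans (x.apply_symm_apply v).symm

theorem Phi_subset_rootsOf (hdiag : ∀ i, B (Δ i) (Δ i) = 1) : Phi B Δ ⊆ rootsOf B Δ := by
  rintro _ ⟨w, hw, i, rfl⟩
  obtain ⟨L, hL⟩ := exists_prod_eq_of_mem_cox hdiag hw
  exact ⟨L, i, by rw [hL]; rfl⟩

end CoxeterGroup

section Chebyshev

open Polynomial.Chebyshev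

theorem eval_U_nonneg_of_one_le {p : ℝ} (hp : 1 ≤ p) (n : ℕ) : 0 ≤ (U ℝ n).eval p := by
  suffices h : 0 ≤ (U ℝ n).eval p ∧ (U ℝ n).eval p ≤ (U ℝ (n + 1)).eval p from h.1
  induction n with
  | zero => simpa using by linarith
  | succ n ih =>
    push_cast
    rw [add_assoc, one_add_one_eq_two, U_add_two]
    simp only [Polynomial.eval_sub, Polynomial.eval_mul, Polynomial.eval_ofNat, Polynomial.eval_X]
    constructor <;> nlinarith [ih.1, ih.2]

variable {k : ℕ}

theorem sin_pi_div_pos (hk : 2 ≤ k) : 0 < Real.sin (Real.pi / k) := by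
  have hk' : (1 : ℝ) < k := by exact_mod_cast hk
  exact Real.sin_pos_of_pos_of_lt_pi (by positivity) (div_lt_self Real.pi_pos hk')

theorem eval_U_cos_pi_div_nonneg (hk : 2 ≤ k) {n : ℕ} (hn : n < k) :
    0 ≤ (U ℝ n).eval (Real.cos (Real.pi / k)) := by
  refine nonneg_of_mul_nonneg_left ?_ (sin_pi_div_pos hk)
  have hn' : (n : ℝ) + 1 ≤ k := by exact_mod_cast hn
  rw [U_real_cos]
  refine Real.sin_nonneg_of_nonneg_of_le_pi (by positivity) ?_
  push_cast
  rw [← mul_div_assoc, div_le_iff₀ (by positivity), mul_comm]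
  gcongr

theorem eval_U_cos_pi_div_sub_one (hk : 2 ≤ k) :
    (U ℝ (k - 1)).eval (Real.cos (Real.pi / k)) = 0 := by
  refine (mul_eq_zero_iff_right (sin_pi_div_pos hk).ne').mp ?_
  rw [U_real_cos]
  push_cast
  rw [sub_add_cancel, mul_div_cancel₀ _ (by positivity), Real.sin_pi]

theorem eval_U_cos_pi_div_sub_two (hk : 2 ≤ k) :
    (U ℝ (k - 2)).eval (Real.cos (Real.pi / k)) = 1 := by
  refine mul_right_cancel₀ (sin_pi_div_pos hk).ne' ?_
  rw [U_real_cos, one_mul, ← Real.sin_pi_sub]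
  congr 1
  push_cast
  field_simp
  ring

end Chebyshev

section Positivity

variable {M κ : Type*} [AddCommGroup M] [Module ℝ M]
variable {B : LinearMap.BilinForm ℝ M} {α : κ → M}

/-- The family `α` satisfies the conditions that the form `B` imposes on simple roots. Linear
independence is not part of it: a linear functional which is positive on `α` takes its place. -/
structure IsSimpleSystem (B : LinearMap.BilinForm ℝ M) (α : κ → M) : Prop where
  isSymm : B.IsSymm
  apply_self : ∀ i, B (α i) (α i) = 1
  apply_of_ne : ∀ i j, i ≠ j → B (α i) (α j) ≤ -1 ∨
    ∃ k : ℕ, 2 ≤ k ∧ B (α i) (α j) = -Real.cos (Real.pi / (k : ℝ))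

theorem IsSimpleSystem.mul_self (h : IsSimpleSystem B α) (i : κ) :
    (unitReflection B ∘ α) i * (unitReflection B ∘ α) i = 1 :=
  unitReflection_mul_self (h.apply_self i)

/-- The alternating word of length `k - 1` maps `α s` to a simple root, and conjugating the
reflection in `α s` by it gives the braid relation of length `k`. -/
theorem isRightDescent_alternatingWord (hB : B.IsSymm) (hα : ∀ i, B (α i) (α i) = 1) {s t : κ}
    {k : ℕ} (hk : 2 ≤ k) (hst : B (α s) (α t) = -Real.cos (Real.pi / k)) :
    IsRightDescent (unitReflection B ∘ α) (alternatingWord s t k) s := by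
  obtain ⟨n, rfl⟩ : ∃ n, k = n + 1 := ⟨k - 1, by omega⟩
  set g := ((alternatingWord s t n).map (unitReflection B ∘ α)).prod
  have hroot : g (α s) = α (if Even n then t else s) := by
    have h₁ := eval_U_cos_pi_div_sub_one hk
    have h₂ := eval_U_cos_pi_div_sub_two hk
    rw [show ((n + 1 : ℕ) : ℤ) - 1 = n by push_cast; ring] at h₁
    rw [show ((n + 1 : ℕ) : ℤ) - 2 = n - 1 by push_cast; ring] at h₂
    rw [prod_alternatingWord_apply hB hα, hst, neg_neg, h₁, h₂, zero_smul, one_smul, zero_add]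
  have hconj := unitReflection_apply_mul
    (apply_prod_unitReflection hB hα (alternatingWord s t n)) (α s)
  refine ⟨alternatingWord s t n, ?_, by simp⟩
  rw [alternatingWord_succ', List.map_cons, List.prod_cons, Function.comp_apply, ← hroot, hconj,
    mul_assoc, Function.comp_apply, unitReflection_mul_self (hα s), mul_one]

open Polynomial.Chebyshev in
theorem IsSimpleSystem.prod_apply_mem_hull_pair (h : IsSimpleSystem B α) {s t : κ} (hst : s ≠ t)
    {P : List κ} (hP : ∀ i ∈ P, i = s ∨ i = t) (hred : IsReducedWord (unitReflection B ∘ α) P)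
    (hs : ¬ IsRightDescent (unitReflection B ∘ α) P s) :
    (P.map (unitReflection B ∘ α)).prod (α s) ∈ PointedCone.hull ℝ {α s, α t} := by
  obtain ⟨n, rfl⟩ : ∃ n, P = alternatingWord s t n :=
    ⟨_, hred.eq_alternatingWord h.mul_self hP hs⟩
  rw [prod_alternatingWord_apply h.isSymm h.apply_self]
  have hcoeff : 0 ≤ (U ℝ n).eval (-B (α s) (α t)) ∧ 0 ≤ (U ℝ (n - 1)).eval (-B (α s) (α t)) := by
    suffices hpos : ∀ m ≤ n, 0 ≤ (U ℝ m).eval (-B (α s) (α t)) by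
      refine ⟨hpos n le_rfl, ?_⟩
      cases n with
      | zero => simp
      | succ m => simpa using hpos m m.le_succ
    intro m hm
    rcases h.apply_of_ne s t hst with hle | ⟨k, hk, hcos⟩
    · exact eval_U_nonneg_of_one_le (le_neg_of_le_neg hle) m
    · have hnk : n < k := by
        by_contra! hkn
        obtain ⟨A, hA⟩ := alternatingWord_suffix s t hkn
        exact hs (hA ▸ (isRightDescent_alternatingWord h.isSymm h.apply_self hk hcos).append_left A)
      rw [hcos, neg_neg]
      exact eval_U_cos_pi_div_nonneg hk (hm.trans_lt hnk)
  have hmem : ∀ i, i = s ∨ i = t → α i ∈ PointedCone.hull ℝ {α s, α t} := by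
    rintro i (rfl | rfl) <;> exact PointedCone.subset_hull (by simp)
  refine Submodule.add_mem _ (PointedCone.smul_mem _ hcoeff.1 (hmem _ ?_))
    (PointedCone.smul_mem _ hcoeff.2 (hmem _ ?_)) <;> split_ifs <;> simp

theorem IsSimpleSystem.prod_apply_mem_hull (h : IsSimpleSystem B α) {L : List κ} {s : κ}
    (hL : IsReducedWord (unitReflection B ∘ α) L)
    (hs : ¬ IsRightDescent (unitReflection B ∘ α) L s) :
    (L.map (unitReflection B ∘ α)).prod (α s) ∈ PointedCone.hull ℝ (Set.range α) := by
  induction hn : L.length using Nat.strong_induction_on generalizing L s with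
  | _ n ih =>
  subst hn
  rcases L.eq_nil_or_concat' with rfl | ⟨L₀, t, rfl⟩
  · exact PointedCone.subset_hull ⟨s, rfl⟩
  have hst : s ≠ t := by
    rintro rfl
    exact hs (isRightDescent_concat (h.mul_self s) L₀)
  obtain ⟨A, P, hP, hprod, hred, hle, hA⟩ :=
    IsReducedWord.exists_append_forall_not_isRightDescent h.mul_self (J := {s, t}) L₀ [t]
      (by simp) hL
  have hcone : PointedCone.hull ℝ {α s, α t} ≤
      (PointedCone.hull ℝ (Set.range α)).comap (A.map (unitReflection B ∘ α)).prod := by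
    have hAlt : A.length < (L₀ ++ [t]).length := by simpa using Nat.lt_succ_of_le hle
    refine Submodule.span_le.mpr (Set.pair_subset ?_ ?_) <;>
      exact ih A.length hAlt hred.of_append_left (hA _ (by simp)) rfl
  have hPs : ¬ IsRightDescent (unitReflection B ∘ α) P s := by
    intro hdesc
    obtain ⟨Q, hQ, hlt⟩ := hdesc.append_left A
    exact hs ⟨Q, by rw [hQ, hprod], hlt.trans_le (hred _ hprod.symm)⟩
  rw [← hprod, List.map_append, List.prod_append]
  exact hcone (h.prod_apply_mem_hull_pair hst hP hred.of_append_right hPs)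

theorem IsSimpleSystem.prod_eq_one_of_forall_pos (h : IsSimpleSystem B α) {f : M →ₗ[ℝ] ℝ}
    (hf : ∀ i, 0 ≤ f (α i)) {L : List κ}
    (hL : ∀ i, 0 < f ((L.map (unitReflection B ∘ α)).prod (α i))) :
    (L.map (unitReflection B ∘ α)).prod = 1 := by
  obtain ⟨P, hprod, hred⟩ := exists_isReducedWord (unitReflection B ∘ α) L
  rw [← hprod] at hL ⊢
  rcases P.eq_nil_or_concat' with rfl | ⟨Q, t, rfl⟩
  · rfl
  have hhull : PointedCone.hull ℝ (Set.range α) ≤ (PointedCone.positive ℝ ℝ).comap f :=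
    Submodule.span_le.mpr (Set.range_subset_iff.mpr hf)
  have hpos : 0 ≤ f ((Q.map (unitReflection B ∘ α)).prod (α t)) :=
    hhull (h.prod_apply_mem_hull hred.of_append_left hred.not_isRightDescent_of_concat)
  have hneg := hL t
  simp only [List.map_append, List.map_cons, List.map_nil, List.prod_append, List.prod_singleton,
    Module.End.mul_apply, Function.comp_apply, unitReflection_apply_self (h.apply_self t),
    map_neg] at hneg
  linarith

end Positivity

section Discreteness

variable {M κ : Type*} [NormedAddCommGroup M] [NormedSpace ℝ M] [FiniteDimensional ℝ M]
variable {B : LinearMap.BilinForm ℝ M} {α : κ → M}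

theorem continuous_unitReflection_apply (B : LinearMap.BilinForm ℝ M) :
    Continuous fun p : M × M ↦ unitReflection B p.1 p.2 := by
  have hB : Continuous fun p : M × M ↦ B p.1 p.2 :=
    (B.toContinuousBilinearMap.continuous.comp continuous_fst).clm_apply continuous_snd
  simp only [unitReflection_apply]
  fun_prop

theorem exists_mem_nhds_forall_pos_unitReflection [Finite κ] {f : M →ₗ[ℝ] ℝ}
    (hf : ∀ i, 0 < f (α i)) {z : M} (hz : B z z = 1) :
    ∃ U ∈ 𝓝 z, ∀ x ∈ U, ∀ y ∈ U, ∀ i,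
      0 < f (unitReflection B x (unitReflection B y (α i))) := by
  have hcont (v : M) : Continuous fun p : M × M ↦ unitReflection B p.1 (unitReflection B p.2 v) :=
    (continuous_unitReflection_apply B).comp <| continuous_fst.prodMk <|
      (continuous_unitReflection_apply B).comp <| continuous_snd.prodMk continuous_const
  have hpos : ∀ᶠ p in 𝓝 z ×ˢ 𝓝 z, ∀ i,
      0 < f (unitReflection B p.1 (unitReflection B p.2 (α i))) := by
    rw [← nhds_prod_eq, eventually_all]
    intro i
    have hz' : 0 < f (unitReflection B z (unitReflection B z (α i))) := by
      rw [← Module.End.mul_apply, unitReflection_mul_self hz]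
      exact hf i
    exact (f.continuous_of_finiteDimensional.comp
      (hcont (α i))).continuousAt.eventually_const_lt hz'
  obtain ⟨U, hU, hUU⟩ := mem_prod_self_iff.mp hpos
  exact ⟨U, hU, fun x hx y hy ↦ @hUU (x, y) ⟨hx, hy⟩⟩

theorem IsSimpleSystem.exists_mem_nhds_eq_or_eq_neg [Finite κ] (h : IsSimpleSystem B α)
    {f : M →ₗ[ℝ] ℝ} (hf : ∀ i, 0 < f (α i)) {z : M} (hz : B z z = 1) :
    ∃ U ∈ 𝓝 z, ∀ x ∈ rootsOf B α ∩ U, ∀ y ∈ rootsOf B α ∩ U, x = y ∨ x = -y := by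
  obtain ⟨U, hU, hpos⟩ := exists_mem_nhds_forall_pos_unitReflection hf hz
  refine ⟨U, hU, fun x hx y hy ↦ ?_⟩
  obtain ⟨L, hL⟩ := exists_prod_eq_unitReflection h.isSymm h.apply_self hx.1
  obtain ⟨P, hP⟩ := exists_prod_eq_unitReflection h.isSymm h.apply_self hy.1
  have hprod : ((L ++ P).map (unitReflection B ∘ α)).prod =
      unitReflection B x * unitReflection B y := by
    rw [List.map_append, List.prod_append, hL, hP]
  refine eq_or_eq_neg_of_unitReflection_mul_eq_one
    (apply_self_of_mem_rootsOf h.isSymm h.apply_self hx.1)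
    (apply_self_of_mem_rootsOf h.isSymm h.apply_self hy.1) ?_
  rw [← hprod]
  refine h.prod_eq_one_of_forall_pos (fun i ↦ (hf i).le) ?_
  rw [hprod]
  exact hpos x hx.2 y hy.2

theorem IsSimpleSystem.finite_inter_rootsOf [Finite κ] (h : IsSimpleSystem B α)
    {f : M →ₗ[ℝ] ℝ} (hf : ∀ i, 0 < f (α i)) {K : Set M} (hK : IsCompact K) :
    (K ∩ rootsOf B α).Finite := by
  have hclosed : IsClosed {v | B v v = 1} :=
    isClosed_eq (B.toContinuousBilinearMap.continuous.clm_apply continuous_id) continuous_const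
  have hfin : (K ∩ {v | B v v = 1} ∩ rootsOf B α).Finite := by
    refine (hK.inter_right hclosed).induction_on (p := fun S ↦ (S ∩ rootsOf B α).Finite) ?_ ?_ ?_ ?_
    · simp
    · exact fun S T hST hT ↦ hT.subset (Set.inter_subset_inter_left _ hST)
    · intro S T hS hT
      rw [Set.union_inter_distrib_right]
      exact hS.union hT
    · intro z hz
      obtain ⟨U, hU, hUroots⟩ := h.exists_mem_nhds_eq_or_eq_neg hf hz.2
      refine ⟨U, mem_nhdsWithin_of_mem_nhds hU, ?_⟩
      rw [Set.inter_comm]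
      rcases (rootsOf B α ∩ U).eq_empty_or_nonempty with hempty | ⟨y, hy⟩
      · simp [hempty]
      · exact (Set.toFinite {y, -y}).subset fun x hx ↦ hUroots x hx y hy
  exact hfin.subset fun x hx ↦
    ⟨⟨hx.1, apply_self_of_mem_rootsOf h.isSymm h.apply_self hx.2⟩, hx.2⟩

end Discreteness

theorem statement0_general {M κ : Type*} [Finite κ] [AddCommGroup M] [Module ℝ M]
    [FiniteDimensional ℝ M] {B : LinearMap.BilinForm ℝ M} {α : κ → M} (h : IsSimpleSystem B α)
    {f : M →ₗ[ℝ] ℝ} (hf : ∀ i, 0 < f (α i)) {ρ : ℕ → M} (hρ : ∀ n, ρ n ∈ rootsOf B α)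
    (hinj : Function.Injective ρ) (N : Seminorm ℝ M) (hN : ∀ v, N v = 0 → v = 0) :
    Tendsto (fun n ↦ N (ρ n)) atTop atTop := by
  let : Norm M := ⟨N⟩
  have hcore : NormedSpace.Core ℝ M :=
    { norm_nonneg := apply_nonneg N
      norm_smul := map_smul_eq_mul N
      norm_triangle := map_add_le_add N
      norm_eq_zero_iff := fun v ↦ ⟨hN v, fun hv ↦ hv ▸ map_zero N⟩ }
  let : NormedAddCommGroup M := NormedAddCommGroup.ofCore hcore
  let : NormedSpace ℝ M := NormedSpace.ofCore hcore
  have : ProperSpace M := FiniteDimensional.proper ℝ M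
  refine (tendsto_norm_cocompact_atTop (E := M)).comp ?_
  rw [← Nat.cofinite_eq_atTop, tendsto_cofinite_cocompact_iff]
  intro K hK
  exact ((h.finite_inter_rootsOf hf hK).preimage hinj.injOn).subset fun n hn ↦ ⟨hn, hρ n⟩

/-- For every injective sequence of positive roots, and every norm on `V`,
the sequence of norms of the roots tends to infinity. -/
theorem statement0 (B : LinearMap.BilinForm ℝ V) (Δ : Module.Basis ι ℝ V)
    (hsymm : ∀ u v : V, B u v = B v u)
    (hdiag : ∀ i : ι, B (Δ i) (Δ i) = 1)
    (hoff : ∀ i j : ι, i ≠ j → B (Δ i) (Δ j) ≤ -1 ∨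
      ∃ k : ℕ, 2 ≤ k ∧ B (Δ i) (Δ j) = -Real.cos (Real.pi / (k : ℝ)))
    (ρ : ℕ → V) (hρ : ∀ n : ℕ, ρ n ∈ posPhi B Δ) (hinj : Function.Injective ρ)
    (N : Seminorm ℝ V) (hN : ∀ v : V, N v = 0 → v = 0) :
    Tendsto (fun n : ℕ => N (ρ n)) atTop atTop := by
  have : FiniteDimensional ℝ V := Δ.finiteDimensional_of_finite
  exact statement0_general (f := ∑ i, Δ.coord i) ⟨⟨hsymm⟩, hdiag, hoff⟩
    (fun i ↦ by simp) (fun n ↦ Phi_subset_rootsOf hdiag (hρ n).1) hinj N hN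
end
end

section
/- The root system Φ is a discrete subset of V: no point of Φ is an accumulation point of Φ. -/
open Filter Topology

noncomputable section

variable {ι V : Type*} [Fintype ι] [NormedAddCommGroup V] [NormedSpace ℝ V]

/-!
Every root `w (α i)` lies in the cone over the simple roots or in its negative. To see this, let
`i` not be a right descent of `w` and factor `w = v * u`, where `u` is the longest reduced suffix
in a dihedral subgroup `⟨s i, s j⟩`. Then `u (α i)` is a combination of `α i` and `α j` whose
coefficients are values of Chebyshev polynomials of the second kind at `-B (α i) (α j)`,
nonnegative because `u` is shorter than the longest element of the dihedral group, and induction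
applies to `v (α i)` and `v (α j)`.

The reflection `s i` changes only the `i`-th coordinate. Hence if the `i`-th coordinate of a root is
positive but becomes negative under `s i`, all its other coordinates are both nonnegative and
nonpositive, and the root is `α i` because roots are `B`-unit vectors. These two inequalities define
a neighbourhood of `α i`, so simple roots are isolated, and `W` acts by homeomorphisms preserving
`Φ`.
-/

section Chebyshev

open Polynomial.Chebyshev Real

lemma U_eval_nonneg_of_one_le {x : ℝ} (hx : 1 ≤ x) {n : ℤ} (hn : -1 ≤ n) :
    0 ≤ (U ℝ n).eval x := by
  induction n, hn using Int.leInduction with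
  | base => simp
  | succ n _ ih =>
    have hT : 1 ≤ (T ℝ (n + 1)).eval x := one_le_eval_T_real _ hx
    rw [U_eq_X_mul_U_add_T, Polynomial.eval_add, Polynomial.eval_mul, Polynomial.eval_X]
    positivity

lemma U_eval_cos_nonneg {θ : ℝ} (hθ₀ : 0 < θ) (hθπ : θ < π) {n : ℤ} (hn : -1 ≤ n)
    (hnθ : (n + 1) * θ ≤ π) : 0 ≤ (U ℝ n).eval (cos θ) := by
  have hn' : (0 : ℝ) ≤ n + 1 := by exact_mod_cast (by lia : 0 ≤ n + 1)
  have hsin : 0 ≤ (U ℝ n).eval (cos θ) * sin θ := by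
    rw [U_real_cos]
    exact sin_nonneg_of_nonneg_of_le_pi (by positivity) hnθ
  exact nonneg_of_mul_nonneg_left hsin (sin_pos_of_pos_of_lt_pi hθ₀ hθπ)

lemma S_eval_two_mul_cos_eq_zero {θ : ℝ} (hθ : sin θ ≠ 0) {n : ℤ} (h : (n + 1) * θ = π) :
    (S ℝ n).eval (2 * cos θ) = 0 := by
  have hsin := S_two_mul_real_cos θ n
  rw [h, sin_pi] at hsin
  exact (mul_eq_zero.mp hsin).resolve_right hθ

lemma S_eval_add_S_eval_two_mul_cos_eq_zero {θ : ℝ} (hθ : sin θ ≠ 0) {n : ℤ}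
    (h : (2 * n + 1) * θ = 2 * π) :
    (S ℝ n).eval (2 * cos θ) + (S ℝ (n - 1)).eval (2 * cos θ) = 0 := by
  have hsum : ((S ℝ n).eval (2 * cos θ) + (S ℝ (n - 1)).eval (2 * cos θ)) * sin θ = 0 := by
    rw [add_mul, S_two_mul_real_cos, S_two_mul_real_cos,
      show (n + 1 : ℝ) * θ = 2 * π - n * θ by linarith, sin_two_pi_sub]
    push_cast
    ring_nf
  exact (mul_eq_zero.mp hsum).resolve_right hθ

end Chebyshev

section Reflection

open Module Polynomial.Chebyshev Real

variable {E : Type*} [AddCommGroup E] [Module ℝ E] {x y : E} {f g : Dual ℝ E}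

lemma reflection_mul_reflection_sq_eq_one (hf : f x = 2) (hg : g y = 2)
    (hfy : f y = 0) (hgx : g x = 0) :
    (reflection hf * reflection hg) ^ 2 = 1 := by
  ext z
  simp only [pow_two, LinearEquiv.mul_apply, reflection_apply, map_sub, map_smul, hf, hg, hfy,
    hgx, LinearEquiv.coe_one, id_eq]
  module

lemma reflection_mul_reflection_pow_eq_one (hf : f x = 2) (hg : g y = 2) {θ : ℝ}
    (hθ : sin θ ≠ 0) (hfg : f y * g x = 2 * cos θ + 2) {m : ℕ} (hm : m * θ = 2 * π) :
    (reflection hf * reflection hg) ^ m = 1 := by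
  have ht : 2 * cos θ = f y * g x - 2 := by linarith
  ext z
  rw [reflection_mul_reflection_pow_apply hf hg m z _ ht]
  obtain ⟨r, rfl | rfl⟩ := m.even_or_odd' <;> push_cast at hm
  · have hS : (S ℝ (r - 1)).eval (2 * cos θ) = 0 :=
      S_eval_two_mul_cos_eq_zero hθ (by push_cast; linarith)
    rw [show ((2 * r : ℕ) - 2 : ℤ) / 2 = r - 1 by lia,
      show ((2 * r : ℕ) - 1 : ℤ) / 2 = r - 1 by lia]
    simp [hS]
  · have hS : (S ℝ r).eval (2 * cos θ) + (S ℝ (r - 1)).eval (2 * cos θ) = 0 :=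
      S_eval_add_S_eval_two_mul_cos_eq_zero hθ (by exact_mod_cast hm)
    rw [show ((2 * r + 1 : ℕ) - 1 : ℤ) / 2 = r by lia,
      show ((2 * r + 1 : ℕ) - 2 : ℤ) / 2 = r - 1 by lia,
      show ((2 * r + 1 : ℕ) - 3 : ℤ) / 2 = r - 1 by lia,
      show ((2 * r + 1 : ℕ) : ℤ) / 2 = r by lia]
    simp [hS]

end Reflection

section CoxeterGroup

open CoxeterSystem

variable {κ W : Type*} [Group W] {M : CoxeterMatrix κ} (cs : CoxeterSystem M W)

lemma not_isRightDescent_of_eq_mul_alternatingWord {v w : W} {i j : κ} {k : ℕ}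
    (hi : ¬ cs.IsRightDescent w i) (hw : w = v * cs.wordProd (alternatingWord i j k))
    (hlen : cs.length v + k = cs.length w) :
    ¬ cs.IsRightDescent v (if Even k then i else j) := by
  intro hdesc
  rw [cs.isRightDescent_iff] at hdesc
  cases k with
  | zero => exact hi (by simp_all [alternatingWord, cs.isRightDescent_iff])
  | succ k =>
    have hletter : (if Even (k + 1) then i else j) = if Even k then j else i := by
      simp only [Nat.even_add_one, ite_not]
    rw [hletter] at hdesc
    rw [alternatingWord_succ', cs.wordProd_cons, ← mul_assoc] at hw
    have hle := cs.length_mul_le (v * cs.simple (if Even k then j else i))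
      (cs.wordProd (alternatingWord i j k))
    have hword := cs.length_wordProd_le (alternatingWord i j k)
    rw [length_alternatingWord] at hword
    rw [← hw] at hle
    lia

lemma exists_eq_mul_alternatingWord {w : W} {i : κ} (hi : ¬ cs.IsRightDescent w i) (j : κ) :
    ∃ (v : W) (k : ℕ), w = v * cs.wordProd (alternatingWord i j k) ∧
      cs.length v + k = cs.length w ∧ ¬ cs.IsRightDescent v i ∧ ¬ cs.IsRightDescent v j := by
  let P (k : ℕ) : Prop :=
    ∃ v, w = v * cs.wordProd (alternatingWord i j k) ∧ cs.length v + k = cs.length w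
  obtain ⟨k, ⟨v, hw, hlen⟩, hmax⟩ : ∃ k, P k ∧ ¬ P (k + 1) := by
    by_contra! hstep
    have hP (k : ℕ) : P k := Nat.rec ⟨w, by simp [alternatingWord]⟩ hstep k
    obtain ⟨v, -, hlen⟩ := hP (cs.length w + 1)
    lia
  have hlast : ¬ cs.IsRightDescent v (if Even k then i else j) :=
    not_isRightDescent_of_eq_mul_alternatingWord cs hi hw hlen
  have hnext : ¬ cs.IsRightDescent v (if Even k then j else i) := by
    refine fun hdesc => hmax ⟨v * cs.simple (if Even k then j else i), ?_, ?_⟩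
    · rw [alternatingWord_succ', cs.wordProd_cons, mul_assoc, cs.simple_mul_simple_cancel_left, hw]
    · have := cs.isRightDescent_iff.mp hdesc
      lia
  refine ⟨v, k, hw, hlen, ?_⟩
  split_ifs at hlast hnext
  exacts [⟨hlast, hnext⟩, ⟨hnext, hlast⟩]

lemma lt_of_eq_mul_alternatingWord {v w : W} {i j : κ} {k : ℕ}
    (hi : ¬ cs.IsRightDescent w i) (hw : w = v * cs.wordProd (alternatingWord i j k))
    (hlen : cs.length v + k = cs.length w) (hM : M i j ≠ 0) : k < M i j := by
  rw [M.symmetric] at hM ⊢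
  by_contra! hle
  have hws : w * cs.simple i = v * cs.wordProd (alternatingWord j i (k + 1)) := by
    rw [alternatingWord_succ, cs.wordProd_concat, hw, mul_assoc]
  have hred := cs.not_isReduced_alternatingWord j i hM (m := k + 1) (by lia)
  have hword := cs.length_wordProd_le (alternatingWord j i (k + 1))
  rw [CoxeterSystem.IsReduced, length_alternatingWord] at hred
  rw [length_alternatingWord] at hword
  have hlt : cs.length (w * cs.simple i) < cs.length w + 1 := calc
    cs.length (w * cs.simple i)
      ≤ cs.length v + cs.length (cs.wordProd (alternatingWord j i (k + 1))) :=
        hws ▸ cs.length_mul_le _ _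
    _ < cs.length w + 1 := by lia
  exact hlt.ne (cs.not_isRightDescent_iff.mp hi)

end CoxeterGroup

/-- A simple system of type `M` for the form `B`: a family of `B`-unit vectors `α i` whose pairwise
products are `-cos (π / M i j)`, or at most `-1` where `M i j = 0`, Mathlib's encoding of `∞`.
Unlike in the literature, `α` is not required to be linearly independent. The diagonal entries
`M i i = 1` encode `B (α i) (α i) = 1`. -/
structure IsSimpleSystem_s2 {κ E : Type*} [AddCommGroup E] [Module ℝ E] (M : CoxeterMatrix κ)
    (B : LinearMap.BilinForm ℝ E) (α : κ → E) : Prop where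
  isSymm : B.IsSymm
  apply_eq {i j : κ} : M i j ≠ 0 → B (α i) (α j) = -Real.cos (Real.pi / M i j)
  apply_le {i j : κ} : M i j = 0 → B (α i) (α j) ≤ -1

lemma exists_isSimpleSystem {κ E : Type*} [AddCommGroup E] [Module ℝ E]
    {B : LinearMap.BilinForm ℝ E} {α : κ → E} (hsymm : B.IsSymm) (hself : ∀ i, B (α i) (α i) = 1)
    (hne : ∀ i j, i ≠ j → B (α i) (α j) ≤ -1 ∨
      ∃ k : ℕ, 2 ≤ k ∧ B (α i) (α j) = -Real.cos (Real.pi / k)) :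
    ∃ M : CoxeterMatrix κ, IsSimpleSystem_s2 M B α := by
  classical
  have hexists (b : ℝ) : ∃ m : ℕ, m ≠ 1 ∧
      ((b ≤ -1 ∨ ∃ k : ℕ, 2 ≤ k ∧ b = -Real.cos (Real.pi / k)) →
        (m ≠ 0 → b = -Real.cos (Real.pi / m)) ∧ (m = 0 → b ≤ -1)) := by
    by_cases hb : ∃ k : ℕ, 2 ≤ k ∧ b = -Real.cos (Real.pi / k)
    · obtain ⟨k, hk, hb⟩ := hb
      exact ⟨k, by lia, fun _ => ⟨fun _ => hb, by lia⟩⟩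
    · exact ⟨0, by lia, fun h => ⟨by simp, fun _ => h.resolve_right hb⟩⟩
  choose order order_ne_one order_spec using hexists
  let M : CoxeterMatrix κ :=
    { M := .of fun i j => if i = j then 1 else order (B (α i) (α j))
      isSymm := .ext fun i j => by simp only [Matrix.of_apply, hsymm.eq (α j), eq_comm]
      diagonal := by simp
      off_diagonal := fun i j hij => by simp [hij, order_ne_one] }
  have hM {i j : κ} (hij : i ≠ j) : M i j = order (B (α i) (α j)) := by simp [M, hij]
  refine ⟨M, hsymm, fun {i j} => ?_, fun {i j} => ?_⟩ <;> obtain rfl | hij := eq_or_ne i j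
  · simp [hself]
  · exact hM hij ▸ (order_spec _ (hne i j hij)).1
  · simp
  · exact hM hij ▸ (order_spec _ (hne i j hij)).2

namespace IsSimpleSystem_s2

open CoxeterSystem Polynomial.Chebyshev Real

variable {κ E W : Type*} [AddCommGroup E] [Module ℝ E] [Group W] {M : CoxeterMatrix κ}
  {B : LinearMap.BilinForm ℝ E} {α : κ → E} (h : IsSimpleSystem_s2 M B α)

include h in
lemma apply_self (i : κ) : B (α i) (α i) = 1 := by
  simpa using h.apply_eq (i := i) (j := i) (by simp)

include h in
lemma apply_comm (x y : E) : B x y = B y x := h.isSymm.eq x y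

/-- The `B`-reflection `s_{α i}` in the simple root `α i`. -/
def reflection (i : κ) : E ≃ₗ[ℝ] E :=
  Module.reflection (x := α i) (f := (2 : ℝ) • B (α i)) (by simp [h.apply_self])

lemma reflection_apply (i : κ) (x : E) : h.reflection i x = x - (2 * B (α i) x) • α i := by
  simp [reflection, Module.reflection_apply]

lemma reflection_simple_self (i : κ) : h.reflection i (α i) = -α i :=
  Module.reflection_apply_self _

lemma apply_reflection_self (i : κ) (x : E) :
    B (h.reflection i x) (h.reflection i x) = B x x := by
  simp only [h.reflection_apply, map_sub, map_smul, LinearMap.sub_apply, LinearMap.smul_apply,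
    smul_eq_mul, h.apply_self, h.apply_comm x (α i)]
  ring

lemma isLiftable_reflection : M.IsLiftable h.reflection := by
  intro i j
  by_cases h₀ : M i j = 0
  · simp [h₀]
  have hB : B (α i) (α j) = -cos (π / M i j) := h.apply_eq h₀
  have hcases : i = j ∨ M i j = 2 ∨ 3 ≤ M i j := by
    by_cases hij : i = j
    · exact .inl hij
    · have := M.off_diagonal i j hij
      lia
  obtain rfl | h₂ | h₃ := hcases
  · rw [M.diagonal, pow_one, mul_eq_one_iff_eq_inv]
    exact (Module.reflection_inv _).symm
  · have hB₀ : B (α i) (α j) = 0 := by simpa [h₂] using hB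
    rw [h₂]
    exact reflection_mul_reflection_sq_eq_one _ _ (by simp [hB₀])
      (by simp [h.apply_comm (α j), hB₀])
  · have hm : (3 : ℝ) ≤ M i j := by exact_mod_cast h₃
    have hsin : 0 < sin (2 * (π / M i j)) := by
      refine sin_pos_of_pos_of_lt_pi (by positivity) ?_
      rw [← mul_div_assoc, div_lt_iff₀ (by positivity)]
      nlinarith [pi_pos]
    refine reflection_mul_reflection_pow_eq_one _ _ hsin.ne' ?_ (by field_simp)
    simp only [LinearMap.smul_apply, smul_eq_mul, h.apply_comm (α j), hB, cos_two_mul]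
    ring

/-- The geometric representation of a Coxeter group `W` of type `M` attached to a simple system:
the simple reflections of `W` act as the `B`-reflections in the simple roots. -/
def rep (cs : CoxeterSystem M W) : W →* (E ≃ₗ[ℝ] E) :=
  cs.lift ⟨h.reflection, h.isLiftable_reflection⟩

variable (cs : CoxeterSystem M W)

lemma rep_simple (i : κ) : h.rep cs (cs.simple i) = h.reflection i :=
  cs.lift_apply_simple h.isLiftable_reflection i

lemma rep_mul_apply (w w' : W) (x : E) : h.rep cs (w * w') x = h.rep cs w (h.rep cs w' x) := by
  rw [map_mul, LinearEquiv.mul_apply]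

lemma rep_inv_apply_rep_apply (w : W) (x : E) : h.rep cs w⁻¹ (h.rep cs w x) = x := by
  rw [← h.rep_mul_apply, inv_mul_cancel, map_one, LinearEquiv.coe_one, id]

lemma apply_rep_self (w : W) (x : E) : B (h.rep cs w x) (h.rep cs w x) = B x x := by
  induction w using cs.simple_induction generalizing x with
  | simple i => rw [h.rep_simple, h.apply_reflection_self]
  | one => simp
  | mul w w' hw hw' => rw [h.rep_mul_apply, hw, hw']

lemma rep_alternatingWord_apply (i j : κ) (k : ℕ) :
    h.rep cs (cs.wordProd (alternatingWord i j k)) (α i) =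
      if Even k then
        (U ℝ k).eval (-B (α i) (α j)) • α i + (U ℝ (k - 1)).eval (-B (α i) (α j)) • α j
      else
        (U ℝ (k - 1)).eval (-B (α i) (α j)) • α i + (U ℝ k).eval (-B (α i) (α j)) • α j := by
  induction k with
  | zero => simp [alternatingWord]
  | succ k ih =>
    rw [alternatingWord_succ', cs.wordProd_cons, h.rep_mul_apply, h.rep_simple, ih]
    push_cast
    rw [add_sub_cancel_right, U_add_one]
    by_cases hk : Even k <;>
    · simp only [hk, Nat.even_add_one, not_true_eq_false, not_false_eq_true, if_true, if_false,
        h.reflection_apply, map_add, map_smul, smul_eq_mul, h.apply_self, h.apply_comm (α j) (α i),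
        Polynomial.eval_sub, Polynomial.eval_mul, Polynomial.eval_X, Polynomial.eval_ofNat]
      module

include h in
lemma U_eval_neg_apply_nonneg {i j : κ} (hij : i ≠ j) {n : ℤ} (hn : -1 ≤ n)
    (hnM : M i j ≠ 0 → n < M i j) : 0 ≤ (U ℝ n).eval (-B (α i) (α j)) := by
  by_cases h₀ : M i j = 0
  · exact U_eval_nonneg_of_one_le (by linarith [h.apply_le h₀]) hn
  · have hM : 2 ≤ M i j := by have := M.off_diagonal i j hij; lia
    have hM' : (2 : ℝ) ≤ M i j := by exact_mod_cast hM
    have hn' : (n + 1 : ℝ) ≤ M i j := by exact_mod_cast hnM h₀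
    rw [h.apply_eq h₀, neg_neg]
    refine U_eval_cos_nonneg (by positivity) ?_ hn ?_
    · exact div_lt_self pi_pos (by linarith)
    · rw [← mul_div_assoc, div_le_iff₀ (by positivity), mul_comm]
      gcongr

lemma exists_rep_alternatingWord_apply_eq {i j : κ} (hij : i ≠ j) {k : ℕ}
    (hk : M i j ≠ 0 → k < M i j) :
    ∃ a b : ℝ, 0 ≤ a ∧ 0 ≤ b ∧
      h.rep cs (cs.wordProd (alternatingWord i j k)) (α i) = a • α i + b • α j := by
  have hU : 0 ≤ (U ℝ k).eval (-B (α i) (α j)) :=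
    h.U_eval_neg_apply_nonneg hij (by lia) (by exact_mod_cast hk)
  have hU' : 0 ≤ (U ℝ (k - 1)).eval (-B (α i) (α j)) :=
    h.U_eval_neg_apply_nonneg hij (by lia) (fun h₀ => by have := hk h₀; lia)
  rw [h.rep_alternatingWord_apply]
  split_ifs
  exacts [⟨_, _, hU, hU', rfl⟩, ⟨_, _, hU', hU, rfl⟩]

theorem rep_apply_mem_hull {w : W} {i : κ} (hi : ¬ cs.IsRightDescent w i) :
    h.rep cs w (α i) ∈ PointedCone.hull ℝ (Set.range α) := by
  induction hn : cs.length w using Nat.strong_induction_on generalizing w i with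
  | _ n ih =>
  obtain rfl | hw := eq_or_ne w 1
  · simpa using PointedCone.subset_hull (Set.mem_range_self i)
  obtain ⟨j, hj⟩ := cs.exists_rightDescent_of_ne_one hw
  have hij : i ≠ j := by
    rintro rfl
    exact hi hj
  obtain ⟨v, k, hwv, hlen, hvi, hvj⟩ := exists_eq_mul_alternatingWord cs hi j
  have hlt : cs.length v < n := by
    have hk : k ≠ 0 := by
      rintro rfl
      exact hvj (by simpa [alternatingWord, hwv] using hj)
    lia
  obtain ⟨a, b, ha, hb, hab⟩ := h.exists_rep_alternatingWord_apply_eq cs hij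
    (lt_of_eq_mul_alternatingWord cs hi hwv hlen)
  rw [hwv, h.rep_mul_apply, hab, map_add, map_smul, map_smul]
  exact add_mem (PointedCone.smul_mem _ ha (ih _ hlt hvi rfl))
    (PointedCone.smul_mem _ hb (ih _ hlt hvj rfl))

theorem rep_apply_mem_hull_or_neg_mem_hull (w : W) (i : κ) :
    h.rep cs w (α i) ∈ PointedCone.hull ℝ (Set.range α) ∨
      -h.rep cs w (α i) ∈ PointedCone.hull ℝ (Set.range α) := by
  by_cases hi : cs.IsRightDescent w i
  · right
    have := h.rep_apply_mem_hull cs (cs.isRightDescent_iff_not_isRightDescent_mul.mp hi)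
    rwa [h.rep_mul_apply, h.rep_simple, h.reflection_simple_self, map_neg] at this
  · exact .inl (h.rep_apply_mem_hull cs hi)

end IsSimpleSystem_s2

section Basis

variable {κ E : Type*} [AddCommGroup E] [Module ℝ E] {Δ : Module.Basis κ ℝ E}

lemma repr_nonneg_of_mem_hull {x : E} (hx : x ∈ PointedCone.hull ℝ (Set.range Δ)) (p : κ) :
    0 ≤ Δ.repr x p := by
  induction hx using Submodule.span_induction with
  | mem x hx =>
    obtain ⟨i, rfl⟩ := hx
    rw [Δ.repr_self]
    exact Finsupp.single_nonneg.mpr zero_le_one p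
  | zero => simp
  | add x y _ _ hx hy => simpa using add_nonneg hx hy
  | smul c x _ hx =>
    obtain ⟨c, hc⟩ := c
    simpa [Nonneg.mk_smul] using mul_nonneg hc hx

lemma eq_smul_of_repr_eq_zero {x : E} {i : κ} (hx : ∀ p ≠ i, Δ.repr x p = 0) :
    x = Δ.repr x i • Δ i := by
  refine Δ.ext_elem fun p => ?_
  obtain rfl | hp := eq_or_ne p i
  · simp
  · simp [hx p hp, Finsupp.single_eq_of_ne hp]

end Basis

namespace IsSimpleSystem_s2

section Basis

variable {κ E W : Type*} [AddCommGroup E] [Module ℝ E] [Group W] {M : CoxeterMatrix κ}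
  {B : LinearMap.BilinForm ℝ E} {Δ : Module.Basis κ ℝ E} (h : IsSimpleSystem_s2 M B Δ)
  (cs : CoxeterSystem M W)

theorem repr_rep_apply_nonneg_or_nonpos (w : W) (j : κ) :
    (∀ p, 0 ≤ Δ.repr (h.rep cs w (Δ j)) p) ∨ ∀ p, Δ.repr (h.rep cs w (Δ j)) p ≤ 0 := by
  refine (h.rep_apply_mem_hull_or_neg_mem_hull cs w j).imp repr_nonneg_of_mem_hull
    fun hneg p => ?_
  simpa using repr_nonneg_of_mem_hull hneg p

lemma repr_reflection_of_ne {i p : κ} (hp : p ≠ i) (x : E) :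
    Δ.repr (h.reflection i x) p = Δ.repr x p := by
  simp [h.reflection_apply, Finsupp.single_eq_of_ne hp]

theorem rep_apply_eq_simple {w : W} {i j : κ} (hpos : 0 < Δ.repr (h.rep cs w (Δ j)) i)
    (hneg : Δ.repr (h.reflection i (h.rep cs w (Δ j))) i < 0) :
    h.rep cs w (Δ j) = Δ i := by
  set ρ := h.rep cs w (Δ j)
  have hρ_nonneg (p : κ) : 0 ≤ Δ.repr ρ p :=
    (h.repr_rep_apply_nonneg_or_nonpos cs w j).resolve_right (fun hle => (hle i).not_gt hpos) p
  have hsρ_nonpos (p : κ) : Δ.repr (h.reflection i ρ) p ≤ 0 := by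
    rw [← h.rep_simple cs, ← h.rep_mul_apply] at hneg ⊢
    exact (h.repr_rep_apply_nonneg_or_nonpos cs _ j).resolve_left
      (fun hge => (hge i).not_gt hneg) p
  have hρ : ρ = Δ.repr ρ i • Δ i := eq_smul_of_repr_eq_zero fun p hp =>
    le_antisymm (h.repr_reflection_of_ne hp ρ ▸ hsρ_nonpos p) (hρ_nonneg p)
  have hsq : Δ.repr ρ i * Δ.repr ρ i = 1 := calc
    Δ.repr ρ i * Δ.repr ρ i = B (Δ.repr ρ i • Δ i) (Δ.repr ρ i • Δ i) := by simp [h.apply_self]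
    _ = 1 := by rw [← hρ, h.apply_rep_self, h.apply_self]
  have hone : Δ.repr ρ i = 1 := by nlinarith
  rw [hρ, hone, one_smul]

end Basis

section RootSystem

variable {κ W : Type*} [Group W] {M : CoxeterMatrix κ}
  {B : LinearMap.BilinForm ℝ V} {Δ : Module.Basis κ ℝ V} (h : IsSimpleSystem_s2 M B Δ)
  (cs : CoxeterSystem M W)

lemma simpleReflections_eq_range : simpleReflections B Δ = Set.range h.reflection := by
  ext e
  simp only [simpleReflections, Set.mem_ofPred_eq, Set.mem_range, LinearEquiv.ext_iff,
    h.apply_self, div_one, h.reflection_apply, eq_comm]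

lemma cox_eq_range_rep : cox B Δ = (h.rep cs).range := by
  rw [cox, MonoidHom.range_eq_map, ← cs.subgroup_closure_range_simple, MonoidHom.map_closure,
    ← Set.range_comp, h.simpleReflections_eq_range]
  congr! 2
  exact funext fun i => (h.rep_simple cs i).symm

lemma mem_Phi_iff {ρ : V} : ρ ∈ Phi B Δ ↔ ∃ w i, h.rep cs w (Δ i) = ρ := by
  simp [Phi, h.cox_eq_range_rep cs]

lemma rep_apply_mem_Phi (w : W) {ρ : V} (hρ : ρ ∈ Phi B Δ) : h.rep cs w ρ ∈ Phi B Δ := by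
  rw [h.mem_Phi_iff cs] at hρ ⊢
  obtain ⟨v, i, rfl⟩ := hρ
  exact ⟨w * v, i, h.rep_mul_apply cs w v _⟩

variable [FiniteDimensional ℝ V]

include h in
theorem eventually_nhds_simple (i : κ) : ∀ᶠ x in 𝓝 (Δ i), x ∈ Phi B Δ → x = Δ i := by
  have hcont (f : V →ₗ[ℝ] ℝ) : Continuous f := f.continuous_of_finiteDimensional
  have hpos : ∀ᶠ x in 𝓝 (Δ i), 0 < Δ.coord i x :=
    (hcont _).continuousAt.eventually_const_lt (by simp)
  have hneg : ∀ᶠ x in 𝓝 (Δ i), (Δ.coord i ∘ₗ (h.reflection i).toLinearMap) x < 0 :=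
    (hcont _).continuousAt.eventually_lt_const (by simp [h.reflection_simple_self])
  filter_upwards [hpos, hneg] with x hx hsx hxΦ
  obtain ⟨w, j, rfl⟩ := (h.mem_Phi_iff M.toCoxeterSystem).mp hxΦ
  exact h.rep_apply_eq_simple _ hx hsx

include h in
theorem eventually_nhds_root {ρ : V} (hρ : ρ ∈ Phi B Δ) :
    ∀ᶠ x in 𝓝 ρ, x ∈ Phi B Δ → x = ρ := by
  set cs := M.toCoxeterSystem
  obtain ⟨w, i, rfl⟩ := (h.mem_Phi_iff cs).mp hρ
  have hcont : Continuous (h.rep cs w⁻¹) :=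
    (h.rep cs w⁻¹).toLinearMap.continuous_of_finiteDimensional
  have htendsto : Tendsto (h.rep cs w⁻¹) (𝓝 (h.rep cs w (Δ i))) (𝓝 (Δ i)) :=
    hcont.tendsto' _ _ (h.rep_inv_apply_rep_apply cs w _)
  filter_upwards [htendsto.eventually (h.eventually_nhds_simple i)] with x hx hxΦ
  apply (h.rep cs w⁻¹).injective
  rw [hx (h.rep_apply_mem_Phi cs _ hxΦ), h.rep_inv_apply_rep_apply]

end RootSystem

end IsSimpleSystem_s2

/-- The root system `Φ` is a discrete subset of `V`: no point of `Φ` is an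
accumulation point of `Φ`. -/
theorem statement2 (B : LinearMap.BilinForm ℝ V) (Δ : Module.Basis ι ℝ V)
    (hsymm : ∀ u v : V, B u v = B v u)
    (hdiag : ∀ i : ι, B (Δ i) (Δ i) = 1)
    (hoff : ∀ i j : ι, i ≠ j → B (Δ i) (Δ j) ≤ -1 ∨
      ∃ k : ℕ, 2 ≤ k ∧ B (Δ i) (Δ j) = -Real.cos (Real.pi / (k : ℝ))) :
    ∀ ρ ∈ Phi B Δ, ¬ AccPt ρ (𝓟 (Phi B Δ)) := by
  have : FiniteDimensional ℝ V := Δ.finiteDimensional_of_finite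
  obtain ⟨M, h⟩ := exists_isSimpleSystem ⟨hsymm⟩ hdiag hoff
  intro ρ hρ
  rw [accPt_iff_frequently, not_frequently]
  filter_upwards [h.eventually_nhds_root hρ] with x hx hacc
  exact hacc.1 (hx hacc.2)
end
end
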